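/- Let T > 0, 0 < α < 1, 0 < λ < 1 and ω ∈ A_1^+, and let f be an integrable function on (0,T). The Abel equation I^α_{0+}φ(x) = f(x) for a.e. x ∈ (0,T) has a solution φ with ‖φ‖_{L^{1,λ}_+((0,T),ω)} < ∞ if and only if there exists a function g with ‖g‖_{L^{1,λ}_+((0,T),ω)} < ∞ such that f_{1−α}(x) = ∫_0^x g(t) dt for all x ∈ [0,T] (equivalently: f_{1−α} is absolutely continuous on [0,T], f_{1−α}(0) = 0, and its a.e.-derivative lies in L^{1,λ}_+((0,T),ω)). When these conditions hold, the solution is unique up to a.e. equality and φ = g a.e. on (0,T), i.e. φ(x) = (d/dx) (Γ(1−α)^{−1} ∫_0^x f(t)(x−t)^{−α} dt) = D^α_{0+}f(x). -/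

import Mathlib

open MeasureTheory
open scoped ENNReal

/-- The one-sided Muckenhoupt class `A_1^+`: `M⁻ω ≤ C·ω` a.e. -/
def MemA1Plus (ω : ℝ → ℝ) : Prop :=
  ∃ C > (0:ℝ), ∀ᵐ x ∂(volume : Measure ℝ), ∀ h > (0:ℝ),
    (∫ y in (x - h)..x, ω y) ≤ C * h * ω x

/-- `Φ⁺_{ω,λ,θ}(x0,h) = h^{λ−1} ∫_{x0−h}^{x0} ω^θ`. -/
noncomputable def Phi (ω : ℝ → ℝ) (lam θ x0 h : ℝ) : ℝ :=
  h ^ (lam - 1) * ∫ y in (x0 - h)..x0, (ω y) ^ θ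

/-- The local one-sided weighted Morrey norm `‖f‖_{L^{p,λ}_+((0,T),ω^θ)}`. -/
noncomputable def morreyLocal (T : ℝ) (ω : ℝ → ℝ) (p lam θ : ℝ) (f : ℝ → ℝ) : ℝ≥0∞ :=
  ⨆ x0 ∈ Set.Icc (0:ℝ) T, ⨆ h ∈ Set.Ioc (0:ℝ) T,
    ((∫⁻ y in Set.Ioo x0 (x0 + h) ∩ Set.Ioo 0 T, ENNReal.ofReal (|f y| ^ p)) /
      ENNReal.ofReal (Phi ω lam θ x0 h)) ^ (1 / p)

/-- The Riemann–Liouville integral of order `α`. -/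
noncomputable def riemannLiouville (α : ℝ) (φ : ℝ → ℝ) (x : ℝ) : ℝ :=
  (Real.Gamma α)⁻¹ * ∫ t in (0:ℝ)..x, φ t * (x - t) ^ (α - 1)

/-- `f_{1−α}(x) = I^{1−α}_{0+}f(x) = Γ(1−α)⁻¹ ∫_0^x f(t)(x−t)^{−α} dt`. -/
noncomputable def fracInt (α : ℝ) (f : ℝ → ℝ) (x : ℝ) : ℝ :=
  (Real.Gamma (1 - α))⁻¹ * ∫ t in (0:ℝ)..x, f t * (x - t) ^ (-α)

noncomputable def abelK (a s : ℝ) : ℝ := if 0 < s then s ^ (a - 1) else 0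

noncomputable def abelJ (a : ℝ) (φ : ℝ → ℝ) (x : ℝ) : ℝ := ∫ t, φ t * abelK a (x - t)

lemma abelK_nonneg (a s : ℝ) : 0 ≤ abelK a s := by
  unfold abelK; split_ifs with h
  · positivity
  · exact le_rfl

lemma abelK_meas (a : ℝ) : Measurable (abelK a) := by
  unfold abelK
  exact Measurable.ite measurableSet_Ioi (by fun_prop) measurable_const

lemma abel_beta {a b L : ℝ} (ha : 0 < a) (hb : 0 < b) (hab : a + b = 1) (hL : 0 < L) :
    ∫ y in (0:ℝ)..L, y ^ (a - 1) * (L - y) ^ (b - 1) = Real.Gamma a * Real.Gamma b := by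
  have h := Complex.betaIntegral_scaled a b hL
  rw [Complex.betaIntegral_eq_Gamma_mul_div _ _ (by simpa) (by simpa), ← Complex.ofReal_add, hab,
    Complex.Gamma_ofReal, Complex.Gamma_ofReal] at h
  simp only [Complex.ofReal_one, sub_self, Complex.cpow_zero, one_mul, Complex.Gamma_one,
    div_one] at h
  have h2 : ∫ y in (0:ℝ)..L, (y:ℂ) ^ ((a:ℂ) - 1) * ((L:ℂ) - y) ^ ((b:ℂ) - 1)
      = ∫ y in (0:ℝ)..L, ((y ^ (a - 1) * (L - y) ^ (b - 1) : ℝ) : ℂ) := by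
    apply intervalIntegral.integral_congr
    intro y hy
    rw [Set.uIcc_of_le hL.le] at hy
    simp only
    push_cast
    rw [Complex.ofReal_cpow hy.1, Complex.ofReal_cpow (by linarith [hy.2])]
    push_cast
    rfl
  rw [h2, intervalIntegral.integral_ofReal] at h
  exact_mod_cast h

lemma abelK_conv {a b : ℝ} (ha : 0 < a) (hb : 0 < b) (hab : a + b = 1) {s x : ℝ} (h : s < x) :
    ∫ t, abelK a (t - s) * abelK b (x - t) = Real.Gamma a * Real.Gamma b := by
  rw [← abel_beta ha hb hab (sub_pos.2 h)]
  have := integral_sub_right_eq_self (μ := volume) (fun y => abelK a y * abelK b (x - s - y)) s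
  rw [intervalIntegral.integral_of_le (sub_pos.2 h).le, integral_Ioc_eq_integral_Ioo,
    ← integral_indicator measurableSet_Ioo]
  simp only [sub_sub_sub_cancel_right] at this
  rw [this]
  congr 1
  ext y
  unfold abelK Set.indicator
  simp only [Set.mem_Ioo, sub_pos]
  by_cases h1 : 0 < y <;> by_cases h2 : y < x - s <;> simp [h1, h2]

lemma abelK_conv_zero {a b s x : ℝ} (h : x ≤ s) (t : ℝ) :
    abelK a (t - s) * abelK b (x - t) = 0 := by
  unfold abelK
  split_ifs <;> first | (exfalso; linarith) | simp

lemma abelK_conv_int {a b : ℝ} (ha : 0 < a) (hb : 0 < b) (hab : a + b = 1) (s x : ℝ) :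
    Integrable (fun t => abelK a (t - s) * abelK b (x - t)) := by
  rcases lt_or_ge s x with h | h
  · by_contra hn
    have := abelK_conv ha hb hab h
    rw [integral_undef hn] at this
    have h1 := Real.Gamma_pos_of_pos ha
    have h2 := Real.Gamma_pos_of_pos hb
    have := mul_pos h1 h2
    linarith
  · simp [abelK_conv_zero h]

lemma abelK_conv_eq {a b : ℝ} (ha : 0 < a) (hb : 0 < b) (hab : a + b = 1) (s x : ℝ) :
    ∫ t, abelK a (t - s) * abelK b (x - t) =
      (Set.Iio x).indicator (fun _ => Real.Gamma a * Real.Gamma b) s := by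
  rcases lt_or_ge s x with h | h
  · rw [abelK_conv ha hb hab h]; simp [h]
  · simp [abelK_conv_zero h, h]

lemma abel_prod_int {a b : ℝ} (ha : 0 < a) (hb : 0 < b) (hab : a + b = 1) {φ : ℝ → ℝ}
    (hφ : Integrable φ) (x : ℝ) :
    Integrable (fun p : ℝ × ℝ => φ p.2 * abelK a (p.1 - p.2) * abelK b (x - p.1))
      (volume.prod volume) := by
  have hm : AEStronglyMeasurable
      (fun p : ℝ × ℝ => φ p.2 * abelK a (p.1 - p.2) * abelK b (x - p.1))
      (volume.prod volume) := by
    refine (hφ.aestronglyMeasurable.comp_snd.mul ?_).mul ?_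
    · exact ((abelK_meas a).comp (measurable_fst.sub measurable_snd)).aestronglyMeasurable
    · exact ((abelK_meas b).comp (measurable_const.sub measurable_fst)).aestronglyMeasurable
  rw [integrable_prod_iff' hm]
  constructor
  · refine Filter.Eventually.of_forall fun s => ?_
    simp only [mul_assoc]
    exact (abelK_conv_int ha hb hab s x).const_mul _
  · have : (fun s => ∫ t, ‖φ s * abelK a (t - s) * abelK b (x - t)‖) =
        (Set.Iio x).indicator (fun s => ‖φ s‖ * (Real.Gamma a * Real.Gamma b)) := by
      ext s
      have : ∀ t, ‖φ s * abelK a (t - s) * abelK b (x - t)‖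
          = ‖φ s‖ * (abelK a (t - s) * abelK b (x - t)) := by
        intro t
        rw [norm_mul, norm_mul, Real.norm_of_nonneg (abelK_nonneg _ _),
          Real.norm_of_nonneg (abelK_nonneg _ _), mul_assoc]
      simp only [this]
      rw [integral_const_mul, abelK_conv_eq ha hb hab]
      by_cases h : s < x <;> simp [h]
    simp only [this]
    exact (hφ.norm.mul_const _).indicator measurableSet_Iio

lemma abelJ_int {a b : ℝ} (ha : 0 < a) (hb : 0 < b) (hab : a + b = 1) {φ : ℝ → ℝ}
    (hφ : Integrable φ) (x : ℝ) :
    Integrable (fun t => abelJ a φ t * abelK b (x - t)) := by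
  have := (abel_prod_int ha hb hab hφ x).integral_prod_left
  simpa only [abelJ, integral_mul_const] using this

lemma abelJ_J {a b : ℝ} (ha : 0 < a) (hb : 0 < b) (hab : a + b = 1) {φ : ℝ → ℝ}
    (hφ : Integrable φ) (x : ℝ) :
    abelJ b (abelJ a φ) x = Real.Gamma a * Real.Gamma b * ∫ t in Set.Iio x, φ t := by
  have := integral_integral_swap (f := fun t s => φ s * abelK a (t - s) * abelK b (x - t))
    (abel_prod_int ha hb hab hφ x)
  unfold abelJ
  simp only [← integral_mul_const]
  rw [this]
  simp only [mul_assoc, integral_const_mul, abelK_conv_eq ha hb hab]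
  rw [← integral_indicator measurableSet_Iio, ← mul_assoc, ← integral_const_mul]
  congr 1
  ext s
  by_cases h : s < x <;> simp [h]; ring

/-- Comparison of `abelJ` of a truncated function with an interval integral. -/
lemma abelJ_trunc {T a : ℝ} (φ : ℝ → ℝ) {x : ℝ} (hx0 : 0 ≤ x) (hxT : x ≤ T) :
    abelJ a ((Set.Ioo 0 T).indicator φ) x = ∫ t in (0:ℝ)..x, φ t * (x - t) ^ (a - 1) := by
  rw [intervalIntegral.integral_of_le hx0, integral_Ioc_eq_integral_Ioo,
    ← integral_indicator measurableSet_Ioo]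
  unfold abelJ
  congr 1
  ext t
  unfold abelK Set.indicator
  simp only [Set.mem_Ioo, sub_pos]
  by_cases h1 : 0 < t <;> by_cases h2 : t < x <;> simp [h1, h2]
  intro h; linarith

lemma abelJ_neg {T a : ℝ} (φ : ℝ → ℝ) {x : ℝ} (hx0 : x ≤ 0) :
    abelJ a ((Set.Ioo 0 T).indicator φ) x = 0 := by
  unfold abelJ
  refine integral_eq_zero_of_ae (Filter.Eventually.of_forall fun t => ?_)
  unfold abelK Set.indicator
  simp only [Set.mem_Ioo, sub_pos, Pi.zero_apply]
  by_cases h1 : 0 < t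
  · have h2 : ¬ t < x := by linarith
    simp [h2]
  · simp [h1]

/-- `abelJ a φ x` only depends on the values a.e. below `x`. -/
lemma abelJ_congr {a x : ℝ} {φ ψ : ℝ → ℝ} (h : ∀ᵐ t, t < x → φ t = ψ t) :
    abelJ a φ x = abelJ a ψ x := by
  unfold abelJ
  apply integral_congr_ae
  filter_upwards [h] with t ht
  by_cases h1 : t < x
  · simp only [ht h1]
  · simp [abelK, h1]

lemma abelJ_const_mul (a c x : ℝ) (φ : ℝ → ℝ) :
    abelJ a (fun t => c * φ t) x = c * abelJ a φ x := by
  unfold abelJ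
  simp only [mul_assoc, integral_const_mul]

lemma abel_Iio {T : ℝ} (φ : ℝ → ℝ) {x : ℝ} (hx0 : 0 ≤ x) (hxT : x ≤ T) :
    ∫ t in Set.Iio x, (Set.Ioo 0 T).indicator φ t = ∫ t in (0:ℝ)..x, φ t := by
  rw [intervalIntegral.integral_of_le hx0, integral_Ioc_eq_integral_Ioo,
    ← integral_indicator measurableSet_Ioo, ← integral_indicator measurableSet_Iio]
  congr 1
  ext t
  unfold Set.indicator
  simp only [Set.mem_Ioo, Set.mem_Iio]
  by_cases h1 : 0 < t <;> by_cases h2 : t < x <;> simp [h1, h2]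
  intro h; linarith

lemma abel_unique {T : ℝ} (hT : 0 < T) {u v : ℝ → ℝ} (hu : IntegrableOn u (Set.Ioo 0 T))
    (hv : IntegrableOn v (Set.Ioo 0 T))
    (h : ∀ x ∈ Set.Icc (0:ℝ) T, ∫ t in (0:ℝ)..x, u t = ∫ t in (0:ℝ)..x, v t) :
    u =ᵐ[volume.restrict (Set.Ioo 0 T)] v := by
  have hu' : IntervalIntegrable u volume 0 T :=
    (intervalIntegrable_iff_integrableOn_Ioo_of_le hT.le).2 hu
  have hv' : IntervalIntegrable v volume 0 T :=
    (intervalIntegrable_iff_integrableOn_Ioo_of_le hT.le).2 hv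
  rw [Filter.EventuallyEq, ae_restrict_iff' measurableSet_Ioo]
  filter_upwards [hu'.ae_hasDerivAt_integral, hv'.ae_hasDerivAt_integral] with x h1 h2 hx
  have hx' : x ∈ Set.uIcc 0 T := by
    rw [Set.uIcc_of_le hT.le]; exact Set.Ioo_subset_Icc_self hx
  have d1 := h1 hx' 0 Set.left_mem_uIcc
  have d2 := h2 hx' 0 Set.left_mem_uIcc
  refine d1.unique (d2.congr_of_eventuallyEq ?_)
  filter_upwards [Ioo_mem_nhds hx.1 hx.2] with y hy
  exact h y (Set.Ioo_subset_Icc_self hy)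

lemma abel_morrey_int {T lam : ℝ} (hT : 0 < T) {ω φ : ℝ → ℝ} (hφ : Measurable φ)
    (h : morreyLocal T ω 1 lam 1 φ < ⊤) : IntegrableOn φ (Set.Ioo 0 T) := by
  have h1 : ((∫⁻ y in Set.Ioo 0 (0 + T) ∩ Set.Ioo 0 T, ENNReal.ofReal (|φ y| ^ (1:ℝ))) /
      ENNReal.ofReal (Phi ω lam 1 0 T)) ^ (1 / (1:ℝ)) ≤ morreyLocal T ω 1 lam 1 φ := by
    unfold morreyLocal
    exact le_iSup₂_of_le 0 ⟨le_rfl, hT.le⟩ (le_iSup₂_of_le T ⟨hT, le_rfl⟩ le_rfl)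
  have h2 := h1.trans_lt h
  simp only [zero_add, Set.inter_self, div_one, ENNReal.rpow_one, Real.rpow_one] at h2
  refine ⟨hφ.aestronglyMeasurable, ?_⟩
  rw [hasFiniteIntegral_iff_norm]
  by_contra hn
  rw [not_lt, top_le_iff] at hn
  simp only [Real.norm_eq_abs] at hn
  rw [hn, ENNReal.top_div_of_ne_top ENNReal.ofReal_ne_top] at h2
  exact lt_irrefl _ h2

/-- The Abel equation implies the primitive identity. -/
lemma abel_forward {T α : ℝ} (hα0 : 0 < α) (hα1 : α < 1) {f φ : ℝ → ℝ}
    (hφ : IntegrableOn φ (Set.Ioo 0 T))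
    (h : ∀ᵐ x ∂(volume.restrict (Set.Ioo 0 T)), riemannLiouville α φ x = f x) :
    ∀ x ∈ Set.Icc (0:ℝ) T, fracInt α f x = ∫ t in (0:ℝ)..x, φ t := by
  intro x hx
  have hb : 0 < 1 - α := by linarith
  have hI := hφ.integrable_indicator measurableSet_Ioo
  have key := abelJ_J hα0 hb (by ring) hI x
  rw [abel_Iio _ hx.1 hx.2] at key
  have hga := Real.Gamma_pos_of_pos hα0
  have hgb := Real.Gamma_pos_of_pos hb
  rw [ae_restrict_iff' measurableSet_Ioo] at h
  have e : abelJ (1 - α) (abelJ α ((Set.Ioo 0 T).indicator φ)) x =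
      abelJ (1 - α) (fun t => Real.Gamma α * (Set.Ioo 0 T).indicator f t) x := by
    apply abelJ_congr
    filter_upwards [h, (measure_eq_zero_iff_ae_notMem.1 (measure_singleton (0:ℝ)) :
      ∀ᵐ t, t ∉ ({0} : Set ℝ))] with t ht ht0 htx
    rcases lt_or_ge 0 t with h0 | h0
    · have hm : t ∈ Set.Ioo 0 T := ⟨h0, htx.trans_le hx.2⟩
      rw [abelJ_trunc _ h0.le hm.2.le, Set.indicator_of_mem hm, ← ht hm, riemannLiouville]
      field_simp
    · rw [abelJ_neg _ h0, Set.indicator_of_notMem (fun hm => absurd hm.1 (not_lt.2 h0)), mul_zero]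
  rw [e, abelJ_const_mul, abelJ_trunc _ hx.1 hx.2] at key
  unfold fracInt
  rw [show (1 - α - 1) = -α by ring, mul_assoc] at key
  have := mul_left_cancel₀ hga.ne' key
  rw [this]
  field_simp

/-- The primitive identity implies the Abel equation. -/
lemma abel_backward {T α : ℝ} (hT : 0 < T) (hα0 : 0 < α) (hα1 : α < 1) {f g : ℝ → ℝ}
    (hf : IntegrableOn f (Set.Ioo 0 T)) (hg : IntegrableOn g (Set.Ioo 0 T))
    (h : ∀ x ∈ Set.Icc (0:ℝ) T, fracInt α f x = ∫ t in (0:ℝ)..x, g t) :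
    ∀ᵐ x ∂(volume.restrict (Set.Ioo 0 T)), riemannLiouville α g x = f x := by
  have hb : 0 < 1 - α := by linarith
  have hgI := hg.integrable_indicator measurableSet_Ioo
  have hfI := hf.integrable_indicator measurableSet_Ioo
  have hga := Real.Gamma_pos_of_pos hα0
  have hgb := Real.Gamma_pos_of_pos hb
  set G := abelJ α ((Set.Ioo 0 T).indicator g) with hG
  -- integrability of `G` on `(0,T)`
  have hGint : IntegrableOn G (Set.Ioo 0 T) := by
    have h1 := (abelJ_int hα0 hb (by ring) hgI T).integrableOn (s := Set.Ioo 0 T)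
    have h2 : IntegrableOn (fun t => (T - t) ^ α * (G t * abelK (1 - α) (T - t)))
        (Set.Ioo 0 T) := by
      refine Integrable.bdd_mul (c := T ^ α) h1
        (Measurable.aestronglyMeasurable (by fun_prop)) ?_
      rw [ae_restrict_iff' measurableSet_Ioo]
      refine Filter.Eventually.of_forall fun t ht => ?_
      have : 0 ≤ T - t := by linarith [ht.2]
      rw [Real.norm_of_nonneg (Real.rpow_nonneg this _)]
      exact Real.rpow_le_rpow this (by linarith [ht.1]) hα0.le
    refine h2.congr_fun (fun t ht => ?_) measurableSet_Ioo
    have h3 : 0 < T - t := by linarith [ht.2]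
    simp only [abelK, h3, if_true]
    rw [mul_left_comm, ← Real.rpow_add h3]
    simp
  have hGI := hGint.integrable_indicator measurableSet_Ioo
  have hJ : ∀ x < T, abelJ (1 - α) ((Set.Ioo 0 T).indicator G) x =
      Real.Gamma α * abelJ (1 - α) ((Set.Ioo 0 T).indicator f) x := by
    intro x hxT
    rcases lt_or_ge x 0 with h0 | h0
    · rw [abelJ_neg _ h0.le, abelJ_neg _ h0.le, mul_zero]
    · have e1 : abelJ (1 - α) ((Set.Ioo 0 T).indicator G) x = abelJ (1 - α) G x := by
        apply abelJ_congr
        refine Filter.Eventually.of_forall fun t htx => ?_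
        rcases lt_or_ge 0 t with ht | ht
        · exact Set.indicator_of_mem (show t ∈ Set.Ioo 0 T from ⟨ht, htx.trans hxT⟩) G
        · rw [Set.indicator_of_notMem (fun hm => absurd hm.1 (not_lt.2 ht)), hG, abelJ_neg _ ht]
      rw [e1, hG, abelJ_J hα0 hb (by ring) hgI, abel_Iio _ h0 hxT.le, ← h x ⟨h0, hxT.le⟩,
        abelJ_trunc _ h0 hxT.le, fracInt, show (1 - α - 1) = -α by ring]
      field_simp
  have hu := abel_unique hT (u := G) (v := fun t => Real.Gamma α * f t) hGint (hf.const_mul _) ?_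
  · rw [Filter.EventuallyEq, ae_restrict_iff' measurableSet_Ioo] at hu
    rw [ae_restrict_iff' measurableSet_Ioo]
    filter_upwards [hu] with x hx hm
    have := hx hm
    rw [hG, abelJ_trunc _ hm.1.le hm.2.le] at this
    rw [riemannLiouville, this]
    field_simp
  · intro y hy
    have k1 := abelJ_J hb hα0 (by ring) hGI y
    have k2 := abelJ_J hb hα0 (by ring) hfI y
    rw [abel_Iio _ hy.1 hy.2] at k1 k2
    have e : abelJ α (abelJ (1 - α) ((Set.Ioo 0 T).indicator G)) y =
        abelJ α (fun x => Real.Gamma α * abelJ (1 - α) ((Set.Ioo 0 T).indicator f) x) y :=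
      abelJ_congr (Filter.Eventually.of_forall fun t ht => hJ t (ht.trans_le hy.2))
    rw [abelJ_const_mul, k1, k2] at e
    rw [intervalIntegral.integral_const_mul]
    have hne : Real.Gamma (1 - α) * Real.Gamma α ≠ 0 := by positivity
    apply mul_left_cancel₀ hne
    rw [e]; ring

/-- Solvability of the Abel equation `I^α_{0+}φ = f` in `L^{1,λ}_+((0,T),ω)`:
it is solvable iff `f_{1−α}` is a primitive of a function `g` of finite
`L^{1,λ}_+((0,T),ω)` norm with `f_{1−α}(0) = 0`, and then the solution is
unique with `φ = g = D^α_{0+}f` a.e. on `(0,T)`. -/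
theorem abel_equation_solvable_morrey (T α lam : ℝ) (hT : 0 < T)
    (hα0 : 0 < α) (hα1 : α < 1) (hlam0 : 0 < lam) (hlam1 : lam < 1)
    (ω : ℝ → ℝ) (hpos : ∀ x, 0 < ω x) (hloc : LocallyIntegrable ω volume)
    (hA : MemA1Plus ω)
    (f : ℝ → ℝ) (hf : IntegrableOn f (Set.Ioo 0 T)) :
    ((∃ φ : ℝ → ℝ, Measurable φ ∧ morreyLocal T ω 1 lam 1 φ < ⊤ ∧
        ∀ᵐ x ∂(volume.restrict (Set.Ioo 0 T)), riemannLiouville α φ x = f x) ↔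
      (∃ g : ℝ → ℝ, Measurable g ∧ morreyLocal T ω 1 lam 1 g < ⊤ ∧
        ∀ x ∈ Set.Icc (0:ℝ) T, fracInt α f x = ∫ t in (0:ℝ)..x, g t)) ∧
    (∀ φ g : ℝ → ℝ,
      Measurable φ → morreyLocal T ω 1 lam 1 φ < ⊤ →
      (∀ᵐ x ∂(volume.restrict (Set.Ioo 0 T)), riemannLiouville α φ x = f x) →
      Measurable g → morreyLocal T ω 1 lam 1 g < ⊤ →
      (∀ x ∈ Set.Icc (0:ℝ) T, fracInt α f x = ∫ t in (0:ℝ)..x, g t) →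
      φ =ᵐ[volume.restrict (Set.Ioo 0 T)] g) := by
  have fwd : ∀ φ : ℝ → ℝ, Measurable φ → morreyLocal T ω 1 lam 1 φ < ⊤ →
      (∀ᵐ x ∂(volume.restrict (Set.Ioo 0 T)), riemannLiouville α φ x = f x) →
      ∀ x ∈ Set.Icc (0:ℝ) T, fracInt α f x = ∫ t in (0:ℝ)..x, φ t :=
    fun φ hm hn h => abel_forward hα0 hα1 (abel_morrey_int hT hm hn) h
  refine ⟨⟨?_, ?_⟩, ?_⟩
  · rintro ⟨φ, hm, hn, h⟩
    exact ⟨φ, hm, hn, fwd φ hm hn h⟩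
  · rintro ⟨g, hm, hn, h⟩
    exact ⟨g, hm, hn, abel_backward hT hα0 hα1 hf (abel_morrey_int hT hm hn) h⟩
  · intro φ g hm hn h hm' hn' h'
    refine abel_unique hT (abel_morrey_int hT hm hn) (abel_morrey_int hT hm' hn') fun x hx => ?_
    rw [← fwd φ hm hn h x hx, h' x hx]
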